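/- arXiv:2111.03955 — 2 statements merged into one kernel-verified Lean document; each statement's English description precedes it below -/
import Mathlib

section
/- Let d ≥ 2, 0 < r < 1, and 2 ≤ p < ∞ with r > d/p − 1, and let a be a symbol of class S⁰_ph on ℝ^d. Set γ₂ = (r + 1 − d/p)/(r + 1 + d(p−2)/(2p)). There exists a constant C, depending only on d, r, p and a, such that for every Schwartz function f on ℝ^d with [f]_{−1} := ((2π)^{−d} ∫_{ℝ^d} |κ|^{−2} |f̂(κ)|² dκ)^{1/2} < ∞, the function (D^{−1}𝔞[f])(x) := (2π)^{−d} ∫_{ℝ^d} e^{i x·κ} |κ|^{−1} a(κ) f̂(κ) dκ satisfies ‖D^{−1}𝔞[f]‖_{L^∞} ≤ C · [f]_{−1}^{γ₂} · [f]_{r,p}^{1−γ₂}. -/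
open MeasureTheory ENNReal
open scoped RealInnerProductSpace

noncomputable section

/-- Shorthand for Euclidean space `ℝ^d`. -/
abbrev Ed (d : ℕ) := EuclideanSpace ℝ (Fin d)

/-- The homogeneous Besov (Gagliardo) seminorm `[f]_{r,p}`. -/
def gagliardo (d : ℕ) (r p : ℝ) {F : Type*} [NormedAddCommGroup F] (f : Ed d → F) : ℝ≥0∞ :=
  (∫⁻ x, ∫⁻ y, (‖f x - f y‖₊ : ℝ≥0∞) ^ p / (‖x - y‖₊ : ℝ≥0∞) ^ (r * p + d)) ^ (1 / p)

/-- The homogeneous Hölder seminorm `{f}_r`. -/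
def holderSemi (d : ℕ) (r : ℝ) {F : Type*} [NormedAddCommGroup F] (f : Ed d → F) : ℝ≥0∞ :=
  ⨆ x, ⨆ y, (‖f x - f y‖₊ : ℝ≥0∞) / (‖x - y‖₊ : ℝ≥0∞) ^ r

/-- The Fourier transform `f̂(κ) = ∫ e^{-i x·κ} f(x) dx`. -/
def ftransform (d : ℕ) (f : Ed d → ℂ) (κ : Ed d) : ℂ :=
  ∫ x, Complex.exp (-(Complex.I * (⟪x, κ⟫ : ℂ))) * f x

/-- The homogeneous Sobolev seminorm `[f]_θ = ((2π)^{-d} ∫ |κ|^{2θ} |f̂(κ)|² dκ)^{1/2}`. -/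
def sobolevSemi (d : ℕ) (θ : ℝ) (f : Ed d → ℂ) : ℝ≥0∞ :=
  (ENNReal.ofReal ((2 * Real.pi) ^ (-(d : ℝ))) *
    ∫⁻ κ, (‖κ‖₊ : ℝ≥0∞) ^ (2 * θ) * (‖ftransform d f κ‖₊ : ℝ≥0∞) ^ (2 : ℕ)) ^ ((1 : ℝ) / 2)

/-- A symbol of class `S⁰_{ph}`: smooth away from the origin and positively
homogeneous of degree `0`. -/
def IsSymbol0 (d : ℕ) (a : Ed d → ℂ) : Prop :=
  ContDiffOn ℝ (⊤ : ℕ∞) a {0}ᶜ ∧ ∀ (c : ℝ) (κ : Ed d), 0 < c → κ ≠ 0 → a (c • κ) = a κ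

/-- The operator `𝔞[f](x) = (2π)^{-d} ∫ e^{i x·κ} a(κ) f̂(κ) dκ` associated with a symbol. -/
def symbOp (d : ℕ) (a : Ed d → ℂ) (f : Ed d → ℂ) (x : Ed d) : ℂ :=
  (((2 * Real.pi) ^ (-(d : ℝ)) : ℝ) : ℂ) *
    ∫ κ, Complex.exp (Complex.I * (⟪x, κ⟫ : ℂ)) * a κ * ftransform d f κ

/-- The partial derivative `∂_i f(x)`. -/
def pd (d : ℕ) (i : Fin d) (f : Ed d → ℝ) (x : Ed d) : ℝ :=
  fderiv ℝ f x (EuclideanSpace.single i 1)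

/-- The half-wave propagator `(e^{itD} g)(x) = (2π)^{-d} ∫ e^{i x·κ} e^{i t|κ|} ĝ(κ) dκ`. -/
def halfWave (d : ℕ) (t : ℝ) (g : Ed d → ℂ) (x : Ed d) : ℂ :=
  (((2 * Real.pi) ^ (-(d : ℝ)) : ℝ) : ℂ) *
    ∫ κ, Complex.exp (Complex.I * ((⟪x, κ⟫ : ℂ) + (t : ℂ) * ((‖κ‖ : ℝ) : ℂ))) *
      ftransform d g κ

end

/-!
Let `η` be a smooth bump function near `1` with `∫ η = 1` and put `M κ = η(|κ|) a(κ)`. Homogeneity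
of `a` gives `∫₀^∞ M(tκ) dt = |κ|⁻¹ a(κ)`, so with `F_t y = f(x + ty)` a change of variables turns
`D⁻¹𝔞[f](x)` into `(2π)^{-d} ∫₀^∞ ℓ(F_t) dt`, where `ℓ(F) = ∫ M F̂`. This functional lives at unit
scale and is bounded in two ways: by `[F]_{r,p}`, because `M 0 = 0` allows `F` to be replaced by
`F - F z`, after which one uses Hölder's inequality and averages over `z` in the unit ball; and by
`[F]_{-1}`, by Cauchy–Schwarz. Rescaling `F_t` to `f` yields `|ℓ(F_t)| ≲ t^{r-d/p} [f]_{r,p}` and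
`|ℓ(F_t)| ≲ t^{-1-d/2} [f]_{-1}`; the first is integrable at `0` exactly when `r > d/p - 1`, the
second at `∞`. Splitting the `t`-integral where the two contributions balance gives the product.
-/

section

open Set FourierTransform SchwartzMap
open scoped NNReal

section Dilation

lemma lintegral_comp_add_smul {E : Type*} [NormedAddCommGroup E] [NormedSpace ℝ E]
    [FiniteDimensional ℝ E] [MeasurableSpace E] [BorelSpace E] (μ : Measure E)
    [μ.IsAddHaarMeasure] (g : E → ℝ≥0∞) (x : E) {t : ℝ} (ht : t ≠ 0) :
    ∫⁻ y, g (x + t • y) ∂μ = ENNReal.ofReal |(t ^ Module.finrank ℝ E)⁻¹| * ∫⁻ y, g y ∂μ := by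
  calc ∫⁻ y, g (x + t • y) ∂μ
      = ∫⁻ y, g (x + y) ∂(μ.map (t • ·)) :=
        (lintegral_map_equiv (fun y ↦ g (x + y))
          (Homeomorph.smul (Units.mk0 t ht)).toMeasurableEquiv).symm
    _ = _ := by
        rw [Measure.map_addHaar_smul μ ht, lintegral_smul_measure, lintegral_add_left_eq_self g,
          smul_eq_mul]

lemma lintegral_lintegral_comp_add_smul {E : Type*} [NormedAddCommGroup E] [NormedSpace ℝ E]
    [FiniteDimensional ℝ E] [MeasurableSpace E] [BorelSpace E] (μ : Measure E)
    [μ.IsAddHaarMeasure] (Ψ : E → E → ℝ≥0∞) (x : E) {t : ℝ} (ht : t ≠ 0) :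
    ∫⁻ y, ∫⁻ z, Ψ (x + t • y) (x + t • z) ∂μ ∂μ =
      ENNReal.ofReal |(t ^ Module.finrank ℝ E)⁻¹| ^ 2 * ∫⁻ y, ∫⁻ z, Ψ y z ∂μ ∂μ := by
  simp_rw [lintegral_comp_add_smul μ (Ψ _) x ht]
  rw [lintegral_const_mul' _ _ ENNReal.ofReal_ne_top,
    lintegral_comp_add_smul μ (fun y ↦ ∫⁻ z, Ψ y z ∂μ) x ht, ← mul_assoc, sq]

variable {d : ℕ} {t : ℝ}

lemma ftransform_comp_add_smul (f : Ed d → ℂ) (x κ : Ed d) (ht : 0 < t) :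
    ftransform d (fun y ↦ f (x + t • y)) (t • κ) =
      (t ^ d)⁻¹ • (Complex.exp (Complex.I * (⟪x, κ⟫ : ℂ)) * ftransform d f κ) := by
  set g : Ed d → ℂ := fun y ↦ Complex.exp (-(Complex.I * (⟪y, κ⟫ : ℂ))) * f y
  have hphase (y : Ed d) :
      Complex.exp (-(Complex.I * (⟪y, t • κ⟫ : ℂ))) * f (x + t • y) =
        Complex.exp (Complex.I * (⟪x, κ⟫ : ℂ)) * g (x + t • y) := by
    rw [← mul_assoc, ← Complex.exp_add, inner_add_left, real_inner_smul_left,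
      real_inner_smul_right]
    congr 2
    push_cast
    ring
  have hsubst : ∫ y, g (x + t • y) = (t ^ d)⁻¹ • ∫ y, g y := by
    rw [Measure.integral_comp_smul_of_nonneg volume (fun y ↦ g (x + y)) t (hR := ht.le),
      integral_add_left_eq_self g x, finrank_euclideanSpace_fin]
  rw [ftransform, integral_congr_ae (.of_forall hphase), integral_const_mul, hsubst,
    mul_smul_comm, ftransform]

lemma integral_mul_ftransform_comp_add_smul (M f : Ed d → ℂ) (x : Ed d) (ht : 0 < t) :
    ∫ ξ, M ξ * ftransform d (fun y ↦ f (x + t • y)) ξ =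
      ∫ κ, Complex.exp (Complex.I * (⟪x, κ⟫ : ℂ)) * M (t • κ) * ftransform d f κ := by
  have htd : t ^ d ≠ 0 := (pow_pos ht d).ne'
  have hsubst := Measure.integral_comp_smul_of_nonneg (volume : Measure (Ed d))
    (fun ξ ↦ M ξ * ftransform d (fun y ↦ f (x + t • y)) ξ) t (hR := ht.le)
  simp only [ftransform_comp_add_smul f x _ ht, mul_smul_comm, integral_smul,
    finrank_euclideanSpace_fin] at hsubst
  rw [← smul_right_injective ℂ (inv_ne_zero htd) hsubst]
  congr with κ
  ring

lemma gagliardo_comp_add_smul {F : Type*} [NormedAddCommGroup F] (r : ℝ) {p : ℝ} (hp : 0 < p)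
    (f : Ed d → F) (x : Ed d) (ht : 0 < t) :
    gagliardo d r p (fun y ↦ f (x + t • y)) =
      ENNReal.ofReal (t ^ (r - d / p)) * gagliardo d r p f := by
  set e : ℝ := r * p + d with he
  set Ψ : Ed d → Ed d → ℝ≥0∞ := fun u v ↦
    (‖f u - f v‖₊ : ℝ≥0∞) ^ p / (‖u - v‖₊ : ℝ≥0∞) ^ e
  have hte : ENNReal.ofReal (t ^ e) ≠ 0 := by simpa using Real.rpow_pos_of_pos ht e
  have hΨ (z w : Ed d) :
      (‖f (x + t • z) - f (x + t • w)‖₊ : ℝ≥0∞) ^ p / (‖z - w‖₊ : ℝ≥0∞) ^ e =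
        ENNReal.ofReal (t ^ e) * Ψ (x + t • z) (x + t • w) := by
    have hdist : (‖x + t • z - (x + t • w)‖₊ : ℝ≥0∞) ^ e =
        ENNReal.ofReal (t ^ e) * (‖z - w‖₊ : ℝ≥0∞) ^ e := by
      rw [add_sub_add_left_eq_sub, ← smul_sub, ← enorm_eq_nnnorm, enorm_smul,
        Real.enorm_of_nonneg ht.le, ENNReal.mul_rpow_of_ne_top ENNReal.ofReal_ne_top enorm_ne_top,
        ENNReal.ofReal_rpow_of_pos ht, enorm_eq_nnnorm]
    simp only [Ψ, hdist]
    rw [← mul_div_assoc, ENNReal.mul_div_mul_left _ _ hte ENNReal.ofReal_ne_top]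
  have hexp : (t ^ e * (t ^ d)⁻¹ ^ 2) ^ (1 / p) = t ^ (r - d / p) := by
    rw [← Real.rpow_natCast t, ← Real.rpow_neg ht.le, ← Real.rpow_two, ← Real.rpow_mul ht.le,
      ← Real.rpow_add ht, ← Real.rpow_mul ht.le, he]
    congr 1
    field_simp
    ring
  have htd : 0 < (t ^ d)⁻¹ := by positivity
  simp_rw [gagliardo, ← he, hΨ, lintegral_const_mul' _ _ ENNReal.ofReal_ne_top]
  rw [lintegral_lintegral_comp_add_smul volume Ψ x ht.ne', finrank_euclideanSpace_fin,
    abs_of_pos htd, ← ENNReal.ofReal_pow htd.le, ← mul_assoc, ← ENNReal.ofReal_mul (by positivity),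
    ENNReal.mul_rpow_of_nonneg _ _ (by positivity), ENNReal.ofReal_rpow_of_pos (by positivity),
    hexp]

lemma sobolevSemi_comp_add_smul (θ : ℝ) (f : Ed d → ℂ) (x : Ed d) (ht : 0 < t) :
    sobolevSemi d θ (fun y ↦ f (x + t • y)) =
      ENNReal.ofReal (t ^ (θ - d / 2)) * sobolevSemi d θ f := by
  set Φ : (Ed d → ℂ) → Ed d → ℝ≥0∞ := fun g κ ↦
    (‖κ‖₊ : ℝ≥0∞) ^ (2 * θ) * (‖ftransform d g κ‖₊ : ℝ≥0∞) ^ 2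
  have hΦ (κ : Ed d) : Φ (fun y ↦ f (x + t • y)) (t • κ) =
      ENNReal.ofReal (t ^ (2 * θ) * ((t ^ d)⁻¹) ^ 2) * Φ f κ := by
    have hphase : ‖Complex.exp (Complex.I * (⟪x, κ⟫ : ℂ))‖ₑ = 1 := by
      rw [← ofReal_norm, mul_comm, Complex.norm_exp_ofReal_mul_I, ENNReal.ofReal_one]
    simp only [Φ, ftransform_comp_add_smul f x κ ht, ← enorm_eq_nnnorm]
    rw [enorm_smul, enorm_smul, enorm_mul, hphase, one_mul, Real.enorm_of_nonneg ht.le,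
      Real.enorm_of_nonneg (by positivity), mul_pow,
      ENNReal.mul_rpow_of_ne_top ENNReal.ofReal_ne_top enorm_ne_top,
      ENNReal.ofReal_rpow_of_pos ht, ENNReal.ofReal_mul (by positivity),
      ENNReal.ofReal_pow (by positivity)]
    ring
  have hscale : ∫⁻ κ, Φ (fun y ↦ f (x + t • y)) κ =
      ENNReal.ofReal (t ^ (2 * θ - d)) * ∫⁻ κ, Φ f κ := by
    have hsubst := lintegral_comp_add_smul volume
      (fun κ ↦ Φ (fun y ↦ f (x + t • y)) (t • κ)) 0 (inv_ne_zero ht.ne')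
    simp only [zero_add, smul_inv_smul₀ ht.ne', hΦ] at hsubst
    rw [hsubst, lintegral_const_mul' _ _ ENNReal.ofReal_ne_top, finrank_euclideanSpace_fin,
      abs_of_pos (by positivity), ← mul_assoc, ← ENNReal.ofReal_mul (by positivity),
      Real.rpow_sub ht, Real.rpow_natCast, inv_pow, inv_inv]
    congr 2
    field_simp
  have hexp : (t ^ (2 * θ - d)) ^ (1 / 2 : ℝ) = t ^ (θ - d / 2) := by
    rw [← Real.rpow_mul ht.le]
    ring_nf
  change (_ * ∫⁻ κ, Φ (fun y ↦ f (x + t • y)) κ) ^ (1 / 2 : ℝ) =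
    _ * (_ * ∫⁻ κ, Φ f κ) ^ (1 / 2 : ℝ)
  rw [hscale, mul_left_comm, ENNReal.mul_rpow_of_nonneg _ _ (by norm_num),
    ENNReal.ofReal_rpow_of_pos (by positivity), hexp]

end Dilation

section Fourier

variable {d : ℕ}

lemma ftransform_eq_fourier (f : Ed d → ℂ) (κ : Ed d) :
    ftransform d f κ = 𝓕 f ((2 * Real.pi)⁻¹ • κ) := by
  rw [Real.fourier_eq', ftransform]
  congr with x
  rw [smul_eq_mul, real_inner_smul_right]
  congr 2
  push_cast
  field_simp

lemma continuous_ftransform {f : Ed d → ℂ} (hf : Integrable f) : Continuous (ftransform d f) := by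
  simp_rw [funext (ftransform_eq_fourier f)]
  exact (VectorFourier.fourierIntegral_continuous Real.continuous_fourierChar continuous_inner
    hf).comp (continuous_const_smul _)

/-- The Fourier transform `f ↦ f̂`, with the normalization of `ftransform`, as a map of the
Schwartz space to itself. -/
noncomputable def ftransformSchwartz (f : 𝓢(Ed d, ℂ)) : 𝓢(Ed d, ℂ) :=
  compCLMOfContinuousLinearEquiv ℂ (ContinuousLinearEquiv.smulLeft
    (Units.mk0 (2 * Real.pi)⁻¹ (inv_ne_zero Real.two_pi_pos.ne'))) (𝓕 f)

lemma coe_ftransformSchwartz (f : 𝓢(Ed d, ℂ)) :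
    ⇑(ftransformSchwartz f) = ftransform d f := by
  ext κ
  rw [ftransform_eq_fourier, ← fourier_coe]
  rfl

lemma integral_mul_ftransform_comm {f g : Ed d → ℂ} (hf : Integrable f) (hg : Integrable g) :
    ∫ κ, g κ * ftransform d f κ = ∫ x, ftransform d g x * f x := by
  set L : Ed d →ₗ[ℝ] Ed d →ₗ[ℝ] ℝ := (2 * Real.pi)⁻¹ • innerₗ (Ed d)
  have hL : Continuous fun q : Ed d × Ed d ↦ L q.1 q.2 := continuous_inner.const_smul _
  have hft (h : Ed d → ℂ) : VectorFourier.fourierIntegral 𝐞 volume L h = ftransform d h := by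
    ext κ
    simp only [VectorFourier.fourierIntegral, ftransform, Circle.smul_def, smul_eq_mul,
      Real.fourierChar_apply]
    congr with x
    congr 2
    simp only [mul_inv_rev, LinearMap.smul_apply, innerₗ_apply_apply, smul_eq_mul, mul_neg,
      Complex.ofReal_neg, Complex.ofReal_mul, Complex.ofReal_ofNat, Complex.ofReal_inv, neg_mul,
      neg_inj, L]
    field_simp
  have hLflip : L.flip = L := by
    ext x y
    simp [L, real_inner_comm]
  have h := VectorFourier.integral_fourierIntegral_smul_eq_flip (μ := volume) (ν := volume)
    Real.continuous_fourierChar hL hg hf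
  rw [hLflip, hft, hft] at h
  exact h.symm

lemma integral_ftransform (M : 𝓢(Ed d, ℂ)) :
    ∫ y, ftransform d M y = ((2 * Real.pi) ^ d : ℝ) • M 0 := by
  have h0 : ∫ y, 𝓕 (M : Ed d → ℂ) y = M 0 := by
    rw [← congrFun (M.continuous.fourierInv_fourier_eq M.integrable (𝓕 M).integrable) 0,
      Real.fourierInv_eq']
    simp
  simp_rw [ftransform_eq_fourier]
  rw [Measure.integral_comp_inv_smul_of_nonneg volume _ Real.two_pi_pos.le, h0,
    finrank_euclideanSpace_fin]

end Fourier

lemma memLp_one_add_norm_rpow_smul {E : Type*} [NormedAddCommGroup E] [InnerProductSpace ℝ E]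
    [FiniteDimensional ℝ E] [MeasurableSpace E] [BorelSpace E] (A : 𝓢(E, ℂ)) {s : ℝ} (hs : 0 ≤ s)
    (q : ℝ≥0∞) (μ : Measure E) [μ.HasTemperateGrowth] :
    MemLp (fun y ↦ (1 + ‖y‖) ^ s • A y) q μ := by
  have hg := Function.hasTemperateGrowth_one_add_norm_sq_rpow E (s / 2)
  have hB := ((smulLeftCLM ℂ (fun y : E ↦ (1 + ‖y‖ ^ 2) ^ (s / 2)) A).memLp q μ).const_smul
    ((√2) ^ s)
  refine hB.mono (by fun_prop) (.of_forall fun y ↦ ?_)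
  have hweight : (1 + ‖y‖) ^ s ≤ √2 ^ s * (1 + ‖y‖ ^ 2) ^ (s / 2) := by
    rw [Real.rpow_div_two_eq_sqrt s (by positivity),
      ← Real.mul_rpow (Real.sqrt_nonneg _) (Real.sqrt_nonneg _)]
    exact Real.rpow_le_rpow (by positivity) (one_add_norm_le_sqrt_two_mul_sqrt y) hs
  rw [Pi.smul_apply, smulLeftCLM_apply_apply hg, smul_smul, norm_smul, norm_smul,
    Real.norm_of_nonneg (by positivity), Real.norm_of_nonneg (by positivity)]
  gcongr

lemma enorm_integral_smul_le_eLpNorm_mul_eLpNorm {α 𝕜 E : Type*} [MeasurableSpace α]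
    {μ : Measure α} [NormedRing 𝕜] [NormedAddCommGroup E] [NormedSpace ℝ E] [Module 𝕜 E]
    [IsBoundedSMul 𝕜 E] {p q : ℝ≥0∞} [p.HolderConjugate q] {φ : α → 𝕜} {f : α → E}
    (hφ : AEStronglyMeasurable φ μ) (hf : AEStronglyMeasurable f μ) :
    ‖∫ x, φ x • f x ∂μ‖ₑ ≤ eLpNorm φ p μ * eLpNorm f q μ :=
  calc ‖∫ x, φ x • f x ∂μ‖ₑ ≤ ∫⁻ x, ‖(φ • f) x‖ₑ ∂μ := enorm_integral_le_lintegral_enorm _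
    _ = eLpNorm (φ • f) 1 μ := eLpNorm_one_eq_lintegral_enorm.symm
    _ ≤ eLpNorm φ p μ * eLpNorm f q μ := eLpNorm_smul_le_mul_eLpNorm hf hφ

section HighFrequency

lemma mul_measure_rpow_le_mul_lintegral_rpow {α : Type*} [MeasurableSpace α] {μ : Measure α}
    {s : Set α} (hs : MeasurableSet s) {p : ℝ} (hp : 0 < p) {c K : ℝ≥0∞} (hK : K ≠ ⊤)
    {Ψ : α → ℝ≥0∞} (h : ∀ z ∈ s, c ≤ K * Ψ z ^ (1 / p)) :
    c * μ s ^ (1 / p) ≤ K * (∫⁻ z, Ψ z ∂μ) ^ (1 / p) := by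
  have hcp : c ^ p * μ s ≤ K ^ p * ∫⁻ z, Ψ z ∂μ := by
    rw [← setLIntegral_const, ← lintegral_const_mul' _ _ (ENNReal.rpow_ne_top_of_nonneg hp.le hK)]
    refine (setLIntegral_mono' hs fun z hz ↦ ?_).trans (setLIntegral_le_lintegral s _)
    calc c ^ p ≤ (K * Ψ z ^ (1 / p)) ^ p := ENNReal.rpow_le_rpow (h z hz) hp.le
      _ = K ^ p * Ψ z := by
        rw [ENNReal.mul_rpow_of_nonneg _ _ hp.le, one_div, ENNReal.rpow_inv_rpow hp.ne']
  have hcp' := ENNReal.rpow_le_rpow hcp (one_div_nonneg.2 hp.le)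
  rwa [ENNReal.mul_rpow_of_nonneg _ _ (by positivity),
    ENNReal.mul_rpow_of_nonneg _ _ (by positivity), one_div, ENNReal.rpow_rpow_inv hp.ne',
    ENNReal.rpow_rpow_inv hp.ne', ← one_div] at hcp'

variable {d : ℕ}

-- `M 0 = 0` makes `ftransform d M` mean-free, so any constant may be subtracted from `F`.
lemma integral_mul_ftransform_eq_integral_mul_sub {M : 𝓢(Ed d, ℂ)} (hM : M 0 = 0) {F : Ed d → ℂ}
    (hF : Integrable F) (b : ℂ) :
    ∫ ξ, M ξ * ftransform d F ξ = ∫ y, ftransform d M y * (F y - b) := by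
  have hmean : ∫ y, ftransform d M y = 0 := by rw [integral_ftransform, hM, smul_zero]
  rw [integral_mul_ftransform_comm hF M.integrable, ← coe_ftransformSchwartz] at *
  set A := ftransformSchwartz M
  obtain ⟨B, -, hB⟩ := A.decay 0 0
  have hAF : Integrable fun y ↦ A y * F y :=
    hF.bdd_mul A.continuous.aestronglyMeasurable (.of_forall fun y ↦ by simpa using hB y)
  simp_rw [mul_sub]
  rw [integral_sub hAF (A.integrable.mul_const b), integral_mul_const, hmean, zero_mul, sub_zero]

lemma eLpNorm_one_add_norm_rpow_smul_sub_le {r p : ℝ} (hp : 0 < p) (hs : 0 ≤ r + d / p)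
    (F : Ed d → ℂ) {z : Ed d} (hz : ‖z‖ ≤ 1) :
    eLpNorm (fun y ↦ (1 + ‖y‖) ^ (-(r + d / p)) • (F y - F z)) (.ofReal p) ≤
      (∫⁻ y, (‖F z - F y‖₊ : ℝ≥0∞) ^ p / (‖z - y‖₊ : ℝ≥0∞) ^ (r * p + d)) ^ (1 / p) := by
  rw [eLpNorm_eq_lintegral_rpow_enorm_toReal (by simpa using hp) ENNReal.ofReal_ne_top,
    ENNReal.toReal_ofReal hp.le]
  refine ENNReal.rpow_le_rpow (lintegral_mono fun y ↦ ?_) (by positivity)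
  have hexp : r * p + d = (r + d / p) * p := by field_simp
  have hdist : ‖z - y‖ₑ ≤ ENNReal.ofReal (1 + ‖y‖) := by
    rw [← ofReal_norm]
    exact ENNReal.ofReal_le_ofReal ((norm_sub_le z y).trans (by gcongr))
  have hy : 0 < 1 + ‖y‖ := by positivity
  rw [← enorm_eq_nnnorm, ← enorm_eq_nnnorm, hexp, ENNReal.rpow_mul,
    ← ENNReal.div_rpow_of_nonneg _ _ hp.le, enorm_smul, Real.rpow_neg hy.le, enorm_sub_rev,
    Real.enorm_of_nonneg (by positivity), ENNReal.ofReal_inv_of_pos (by positivity),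
    ← ENNReal.ofReal_rpow_of_pos hy, mul_comm, ← div_eq_mul_inv]
  gcongr

lemma enorm_integral_mul_ftransform_le_eLpNorm_mul {r p : ℝ} (hp : 1 ≤ p) (hs : 0 ≤ r + d / p)
    {M : 𝓢(Ed d, ℂ)} (hM : M 0 = 0) {F : Ed d → ℂ} (hF : Integrable F) {z : Ed d}
    (hz : ‖z‖ ≤ 1) :
    ‖∫ ξ, M ξ * ftransform d F ξ‖ₑ ≤
      eLpNorm (fun y ↦ (1 + ‖y‖) ^ (r + d / p) • ftransform d M y)
        (ENNReal.ofReal p).conjExponent *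
      (∫⁻ y, (‖F z - F y‖₊ : ℝ≥0∞) ^ p / (‖z - y‖₊ : ℝ≥0∞) ^ (r * p + d)) ^ (1 / p) := by
  have : (ENNReal.ofReal p).conjExponent.HolderConjugate (ENNReal.ofReal p) :=
    (ENNReal.HolderConjugate.conjExponent (by simpa using hp)).symm
  set A : Ed d → ℂ := fun y ↦ (1 + ‖y‖) ^ (r + d / p) • ftransform d M y
  set G : Ed d → ℂ := fun y ↦ (1 + ‖y‖) ^ (-(r + d / p)) • (F y - F z)
  have hAG (y : Ed d) : ftransform d M y * (F y - F z) = A y • G y := by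
    have hy : 0 < 1 + ‖y‖ := by positivity
    rw [smul_eq_mul, smul_mul_smul_comm, ← Real.rpow_add hy, add_neg_cancel, Real.rpow_zero,
      one_smul]
  have hA : AEStronglyMeasurable A := by
    have := continuous_ftransform M.integrable
    fun_prop
  have hweight : Measurable fun y : Ed d ↦ (1 + ‖y‖) ^ (-(r + d / p)) := by fun_prop
  have hG : AEStronglyMeasurable G :=
    hweight.aestronglyMeasurable.smul (hF.aestronglyMeasurable.sub aestronglyMeasurable_const)
  simp_rw [integral_mul_ftransform_eq_integral_mul_sub hM hF (F z), hAG]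
  exact (enorm_integral_smul_le_eLpNorm_mul_eLpNorm hA hG).trans <| mul_le_mul_right
    (eLpNorm_one_add_norm_rpow_smul_sub_le (one_pos.trans_le hp) hs F hz) _

lemma exists_enorm_integral_mul_ftransform_le_gagliardo {r p : ℝ} (hp : 1 ≤ p)
    (hs : 0 ≤ r + d / p) {M : 𝓢(Ed d, ℂ)} (hM : M 0 = 0) :
    ∃ C : ℝ≥0, ∀ F : Ed d → ℂ, Integrable F →
      ‖∫ ξ, M ξ * ftransform d F ξ‖ₑ ≤ C * gagliardo d r p F := by
  set K : ℝ≥0∞ := eLpNorm (fun y ↦ (1 + ‖y‖) ^ (r + d / p) • ftransform d M y)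
    (ENNReal.ofReal p).conjExponent
  have hK : K ≠ ⊤ := by
    have := memLp_one_add_norm_rpow_smul (ftransformSchwartz M) hs (ENNReal.ofReal p).conjExponent
      volume
    rw [coe_ftransformSchwartz] at this
    exact this.eLpNorm_ne_top
  set m : ℝ≥0∞ := volume (Metric.closedBall (0 : Ed d) 1) ^ (1 / p)
  have hm0 : m ≠ 0 :=
    (ENNReal.rpow_pos (Metric.measure_closedBall_pos volume 0 one_pos)
      measure_closedBall_lt_top.ne).ne'
  have hm : m ≠ ⊤ := ENNReal.rpow_ne_top_of_nonneg (by positivity) measure_closedBall_lt_top.ne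
  refine ⟨(K / m).toNNReal, fun F hF ↦ ?_⟩
  rw [ENNReal.coe_toNNReal (ENNReal.div_ne_top hK hm0), ← ENNReal.mul_div_right_comm,
    ENNReal.le_div_iff_mul_le (.inl hm0) (.inl hm)]
  exact mul_measure_rpow_le_mul_lintegral_rpow Metric.isClosed_closedBall.measurableSet
    (one_pos.trans_le hp) hK fun z hz ↦
      enorm_integral_mul_ftransform_le_eLpNorm_mul hp hs hM hF (by simpa using hz)

end HighFrequency

section LowFrequency

variable {d : ℕ} [NeZero d]

lemma eLpNorm_norm_rpow_smul_ftransform (θ : ℝ) (F : Ed d → ℂ) :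
    eLpNorm (fun κ ↦ ‖κ‖ ^ θ • ftransform d F κ) 2 =
      ENNReal.ofReal ((2 * Real.pi) ^ (d / 2 : ℝ)) * sobolevSemi d θ F := by
  have hpi : 0 < 2 * Real.pi := Real.two_pi_pos
  have hpt : ∀ᵐ κ : Ed d, ‖‖κ‖ ^ θ • ftransform d F κ‖ₑ ^ (2 : ℝ) =
      (‖κ‖₊ : ℝ≥0∞) ^ (2 * θ) * (‖ftransform d F κ‖₊ : ℝ≥0∞) ^ 2 := by
    filter_upwards [Measure.ae_ne volume (0 : Ed d)] with κ hκ
    have hκ' : 0 < ‖κ‖ := norm_pos_iff.2 hκ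
    rw [enorm_smul, Real.enorm_of_nonneg (by positivity), ← ENNReal.ofReal_rpow_of_pos hκ',
      ofReal_norm, ENNReal.mul_rpow_of_nonneg _ _ zero_le_two, ← ENNReal.rpow_mul, mul_comm θ,
      ENNReal.rpow_two, enorm_eq_nnnorm, enorm_eq_nnnorm]
  have hconst : ENNReal.ofReal ((2 * Real.pi) ^ (d / 2 : ℝ)) *
      ENNReal.ofReal ((2 * Real.pi) ^ (-d : ℝ)) ^ (1 / 2 : ℝ) = 1 := by
    rw [ENNReal.ofReal_rpow_of_pos (by positivity), ← ENNReal.ofReal_mul (by positivity),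
      ← Real.rpow_mul hpi.le, ← Real.rpow_add hpi]
    ring_nf
    simp
  rw [eLpNorm_eq_lintegral_rpow_enorm_toReal two_ne_zero ENNReal.ofNat_ne_top,
    ENNReal.toReal_ofNat, lintegral_congr_ae hpt, sobolevSemi,
    ENNReal.mul_rpow_of_nonneg _ _ (by norm_num), ← mul_assoc, hconst, one_mul]

lemma exists_enorm_integral_mul_ftransform_le_sobolevSemi {θ : ℝ} (hθ : θ ≤ 0)
    (M : 𝓢(Ed d, ℂ)) :
    ∃ C : ℝ≥0, ∀ F : Ed d → ℂ, Integrable F →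
      ‖∫ ξ, M ξ * ftransform d F ξ‖ₑ ≤ C * sobolevSemi d θ F := by
  set A : Ed d → ℂ := fun κ ↦ ‖κ‖ ^ (-θ) • M κ
  have hA : MemLp A 2 := by
    refine (memLp_one_add_norm_rpow_smul M (neg_nonneg.2 hθ) 2 volume).mono
      (Measurable.aestronglyMeasurable (by fun_prop)) (.of_forall fun κ ↦ ?_)
    have hκ : ‖κ‖ ≤ 1 + ‖κ‖ := by linarith
    rw [norm_smul, norm_smul, Real.norm_of_nonneg (by positivity),
      Real.norm_of_nonneg (by positivity)]
    gcongr
    exact neg_nonneg.2 hθ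
  refine ⟨(eLpNorm A 2).toNNReal * ((2 * Real.pi) ^ (d / 2 : ℝ)).toNNReal, fun F hF ↦ ?_⟩
  set B : Ed d → ℂ := fun κ ↦ ‖κ‖ ^ θ • ftransform d F κ
  have hB : AEStronglyMeasurable B := by
    have := (continuous_ftransform hF).measurable
    exact Measurable.aestronglyMeasurable (by fun_prop)
  have hAB : ∀ᵐ κ, M κ * ftransform d F κ = A κ • B κ := by
    filter_upwards [Measure.ae_ne volume (0 : Ed d)] with κ hκ
    rw [smul_eq_mul, smul_mul_smul_comm, ← Real.rpow_add (norm_pos_iff.2 hκ), neg_add_cancel,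
      Real.rpow_zero, one_smul]
  rw [integral_congr_ae hAB, ENNReal.coe_mul, ENNReal.coe_toNNReal hA.eLpNorm_ne_top, mul_assoc]
  exact (enorm_integral_smul_le_eLpNorm_mul_eLpNorm hA.aestronglyMeasurable hB).trans_eq
    (congrArg _ (eLpNorm_norm_rpow_smul_ftransform θ F))

end LowFrequency

section Localization

/-- A smooth nonnegative function on `ℝ` with integral `1`, supported in `[1/2, 3/2]`. Composed with
the norm it localizes frequencies to an annulus. -/
noncomputable def annularCutoff : ℝ → ℝ :=
  (⟨1 / 4, 1 / 2, by norm_num, by norm_num⟩ : ContDiffBump (1 : ℝ)).normed volume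

lemma annularCutoff_nonneg (s : ℝ) : 0 ≤ annularCutoff s := ContDiffBump.nonneg_normed _ s

lemma contDiff_annularCutoff : ContDiff ℝ (⊤ : ℕ∞) annularCutoff := ContDiffBump.contDiff_normed _

lemma annularCutoff_eq_zero {s : ℝ} (hs : 1 / 2 ≤ |s - 1|) : annularCutoff s = 0 := by
  rw [annularCutoff, ← Function.notMem_support, ContDiffBump.support_normed_eq, Metric.mem_ball,
    not_lt, Real.dist_eq]
  exact hs

lemma integrable_annularCutoff : Integrable annularCutoff := ContDiffBump.integrable_normed _

lemma integral_annularCutoff_mul {c : ℝ} (hc : 0 < c) :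
    ∫ t in Ioi 0, annularCutoff (t * c) = c⁻¹ := by
  have hIoi : ∫ t in Ioi 0, annularCutoff t = 1 := by
    rw [setIntegral_eq_integral_of_forall_compl_eq_zero fun s hs ↦ annularCutoff_eq_zero ?_]
    · exact ContDiffBump.integral_normed _
    · rw [mem_Ioi, not_lt] at hs
      rw [abs_sub_comm]
      exact le_abs.2 (.inl (by linarith))
  rw [integral_comp_mul_right_Ioi annularCutoff 0 hc, zero_mul, hIoi, smul_eq_mul, mul_one]

variable {d : ℕ}

/-- The part `η(|κ|) a(κ)` of a symbol `a` near the unit sphere, with `η` the `annularCutoff`. -/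
noncomputable def localizedSymbol (a : Ed d → ℂ) (κ : Ed d) : ℂ := (annularCutoff ‖κ‖ : ℂ) * a κ

lemma localizedSymbol_eq_zero (a : Ed d → ℂ) {κ : Ed d} (hκ : 1 / 2 ≤ |‖κ‖ - 1|) :
    localizedSymbol a κ = 0 := by
  rw [localizedSymbol, annularCutoff_eq_zero hκ, Complex.ofReal_zero, zero_mul]

lemma hasCompactSupport_localizedSymbol (a : Ed d → ℂ) : HasCompactSupport (localizedSymbol a) := by
  refine .intro (isCompact_closedBall 0 2) fun κ hκ ↦ localizedSymbol_eq_zero a (le_abs.2 (.inl ?_))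
  have : 2 < ‖κ‖ := by simpa using hκ
  linarith

namespace IsSymbol0

variable {a : Ed d → ℂ}

lemma contDiff_localizedSymbol (ha : IsSymbol0 d a) :
    ContDiff ℝ (⊤ : ℕ∞) (localizedSymbol a) := by
  refine contDiff_iff_contDiffAt.2 fun κ ↦ ?_
  rcases eq_or_ne κ 0 with rfl | hκ
  · refine (contDiffAt_const (c := (0 : ℂ))).congr_of_eventuallyEq ?_
    filter_upwards [Metric.ball_mem_nhds (0 : Ed d) one_half_pos] with κ hκ
    have : ‖κ‖ < 1 / 2 := by simpa using hκ
    refine localizedSymbol_eq_zero a ?_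
    rw [abs_sub_comm]
    exact le_abs.2 (.inl (by linarith))
  · have hcutoff : ContDiffAt ℝ (⊤ : ℕ∞) (fun κ : Ed d ↦ (annularCutoff ‖κ‖ : ℂ)) κ :=
      Complex.ofRealCLM.contDiff.contDiffAt.comp κ
        (contDiff_annularCutoff.contDiffAt.comp κ (contDiffAt_norm ℝ hκ))
    exact hcutoff.mul (ha.1.contDiffAt (isOpen_compl_singleton.mem_nhds hκ))

lemma localizedSymbol_smul (ha : IsSymbol0 d a) {t : ℝ} (ht : 0 < t) {κ : Ed d} (hκ : κ ≠ 0) :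
    localizedSymbol a (t • κ) = (annularCutoff (t * ‖κ‖) : ℂ) * a κ := by
  rw [localizedSymbol, ha.2 t κ ht hκ, norm_smul, Real.norm_of_nonneg ht.le]

lemma exists_norm_le (ha : IsSymbol0 d a) : ∃ B, ∀ κ ≠ 0, ‖a κ‖ ≤ B := by
  have hcont : ContinuousOn a (Metric.sphere 0 1) :=
    ha.1.continuousOn.mono fun κ hκ ↦ ne_zero_of_mem_unit_sphere ⟨κ, hκ⟩
  obtain ⟨B, hB⟩ := (isCompact_sphere (0 : Ed d) 1).exists_bound_of_continuousOn hcont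
  refine ⟨B, fun κ hκ ↦ ?_⟩
  rw [← ha.2 ‖κ‖⁻¹ κ (inv_pos.2 (norm_pos_iff.2 hκ)) hκ]
  exact hB _ (by simp [norm_smul, hκ])

end IsSymbol0

end Localization

section Superposition

variable {d : ℕ} [NeZero d] {a : Ed d → ℂ}

lemma IsSymbol0.integrable_prod_localizedSymbol_smul_mul (ha : IsSymbol0 d a) {g : Ed d → ℂ}
    (hg : AEStronglyMeasurable g) (hag : Integrable fun κ ↦ ((‖κ‖ : ℝ) : ℂ)⁻¹ * a κ * g κ) :
    Integrable (Function.uncurry fun (t : ℝ) κ ↦ localizedSymbol a (t • κ) * g κ)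
      ((volume.restrict (Ioi 0)).prod volume) := by
  have hM := ha.contDiff_localizedSymbol.continuous
  have hmeas : AEStronglyMeasurable (fun z : ℝ × Ed d ↦ localizedSymbol a (z.1 • z.2) * g z.2)
      ((volume.restrict (Ioi 0)).prod volume) :=
    (Continuous.aestronglyMeasurable (by fun_prop)).mul hg.comp_snd
  refine (integrable_prod_iff' hmeas).2 ?_
  constructor
  · filter_upwards [Measure.ae_ne volume (0 : Ed d)] with κ hκ
    have hη : IntegrableOn (fun t ↦ annularCutoff (t * ‖κ‖)) (Ioi 0) :=
      (integrable_annularCutoff.comp_mul_right' (norm_ne_zero_iff.2 hκ)).integrableOn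
    have hη' : IntegrableOn (fun t ↦ (annularCutoff (t * ‖κ‖) : ℂ) * (a κ * g κ)) (Ioi 0) :=
      hη.ofReal.mul_const _
    refine hη'.congr_fun (fun t ht ↦ ?_) measurableSet_Ioi
    simp only [ha.localizedSymbol_smul ht hκ, mul_assoc]
  · refine hag.norm.congr ?_
    filter_upwards [Measure.ae_ne volume (0 : Ed d)] with κ hκ
    have hnorm : EqOn (fun t ↦ ‖localizedSymbol a (t • κ) * g κ‖)
        (fun t ↦ annularCutoff (t * ‖κ‖) * ‖a κ * g κ‖) (Ioi 0) := fun t ht ↦ by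
      simp only [ha.localizedSymbol_smul ht hκ, norm_mul, Complex.norm_real,
        Real.norm_of_nonneg (annularCutoff_nonneg _), mul_assoc]
    rw [setIntegral_congr_fun measurableSet_Ioi hnorm, integral_mul_const,
      integral_annularCutoff_mul (norm_pos_iff.2 hκ)]
    simp [mul_assoc]

lemma IsSymbol0.integral_inv_norm_mul_eq_integral_localizedSymbol (ha : IsSymbol0 d a)
    {g : Ed d → ℂ} (hg : AEStronglyMeasurable g)
    (hag : Integrable fun κ ↦ ((‖κ‖ : ℝ) : ℂ)⁻¹ * a κ * g κ) :
    ∫ κ, ((‖κ‖ : ℝ) : ℂ)⁻¹ * a κ * g κ =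
      ∫ t in Ioi (0 : ℝ), ∫ κ, localizedSymbol a (t • κ) * g κ := by
  rw [integral_integral_swap (ha.integrable_prod_localizedSymbol_smul_mul hg hag)]
  refine integral_congr_ae ?_
  filter_upwards [Measure.ae_ne volume (0 : Ed d)] with κ hκ
  have hM : EqOn (fun t ↦ localizedSymbol a (t • κ) * g κ)
      (fun t ↦ (annularCutoff (t * ‖κ‖) : ℂ) * (a κ * g κ)) (Ioi 0) := fun t ht ↦ by
    simp only [ha.localizedSymbol_smul ht hκ, mul_assoc]
  rw [setIntegral_congr_fun measurableSet_Ioi hM, integral_mul_const, integral_complex_ofReal,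
    integral_annularCutoff_mul (norm_pos_iff.2 hκ), Complex.ofReal_inv, mul_assoc]

lemma IsSymbol0.enorm_integral_le_lintegral_localizedSymbol (ha : IsSymbol0 d a) {f : Ed d → ℂ}
    (hf : Integrable f)
    (haf : Integrable fun κ ↦ ((‖κ‖ : ℝ) : ℂ)⁻¹ * a κ * ftransform d f κ) (x : Ed d) :
    ‖∫ κ, Complex.exp (Complex.I * (⟪x, κ⟫ : ℂ)) * ((‖κ‖ : ℝ) : ℂ)⁻¹ * a κ * ftransform d f κ‖ₑ ≤
      ∫⁻ t in Ioi (0 : ℝ),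
        ‖∫ ξ, localizedSymbol a ξ * ftransform d (fun y ↦ f (x + t • y)) ξ‖ₑ := by
  set g : Ed d → ℂ := fun κ ↦ Complex.exp (Complex.I * (⟪x, κ⟫ : ℂ)) * ftransform d f κ
  have hg : Continuous g := by
    have := continuous_ftransform hf
    fun_prop
  have hag : Integrable fun κ ↦ ((‖κ‖ : ℝ) : ℂ)⁻¹ * a κ * g κ := by
    have hphase : Continuous fun κ : Ed d ↦ Complex.exp (Complex.I * (⟪x, κ⟫ : ℂ)) := by fun_prop
    refine (haf.bdd_mul (c := 1) hphase.aestronglyMeasurable (.of_forall fun κ ↦ ?_)).congr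
      (.of_forall fun κ ↦ by simp only [g]; ring)
    rw [mul_comm, Complex.norm_exp_ofReal_mul_I]
  calc _ = ‖∫ κ, ((‖κ‖ : ℝ) : ℂ)⁻¹ * a κ * g κ‖ₑ := by
        congr with κ
        simp only [g]
        ring
    _ = ‖∫ t in Ioi (0 : ℝ), ∫ κ, localizedSymbol a (t • κ) * g κ‖ₑ := by
        rw [ha.integral_inv_norm_mul_eq_integral_localizedSymbol hg.aestronglyMeasurable hag]
    _ ≤ ∫⁻ t in Ioi (0 : ℝ), ‖∫ κ, localizedSymbol a (t • κ) * g κ‖ₑ :=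
        enorm_integral_le_lintegral_enorm _
    _ = _ := setLIntegral_congr_fun measurableSet_Ioi fun t ht ↦ by
        rw [integral_mul_ftransform_comp_add_smul _ f x ht]
        congr with κ
        simp only [g]
        ring

end Superposition

section Interpolation

variable {α β : ℝ}

lemma setLIntegral_Ioc_rpow_sub_one (hα : 0 < α) {T : ℝ} (hT : 0 ≤ T) :
    ∫⁻ t in Ioc 0 T, ENNReal.ofReal (t ^ (α - 1)) = ENNReal.ofReal (α⁻¹ * T ^ α) := by
  have hint : IntegrableOn (fun t : ℝ ↦ t ^ (α - 1)) (Ioc 0 T) :=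
    (intervalIntegrable_iff_integrableOn_Ioc_of_le hT).1
      (intervalIntegral.intervalIntegrable_rpow' (by linarith))
  rw [← ofReal_integral_eq_lintegral_ofReal hint
    (ae_restrict_of_forall_mem measurableSet_Ioc fun t ht ↦ Real.rpow_nonneg ht.1.le _),
    ← intervalIntegral.integral_of_le hT, integral_rpow (.inl (by linarith)), sub_add_cancel,
    Real.zero_rpow hα.ne', sub_zero, div_eq_inv_mul]

lemma setLIntegral_Ioi_rpow_neg_one_sub (hβ : 0 < β) {T : ℝ} (hT : 0 < T) :
    ∫⁻ t in Ioi T, ENNReal.ofReal (t ^ (-1 - β)) = ENNReal.ofReal (β⁻¹ * T ^ (-β)) := by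
  rw [← ofReal_integral_eq_lintegral_ofReal (integrableOn_Ioi_rpow_of_lt (by linarith) hT)
    (ae_restrict_of_forall_mem measurableSet_Ioi fun t ht ↦ Real.rpow_nonneg (hT.trans ht).le _),
    integral_Ioi_rpow_of_lt (by linarith) hT]
  ring_nf

lemma rpow_div_rpow_one_div_add_mul (hα : 0 < α) (hβ : 0 < β) {s g : ℝ} (hs : 0 < s) (hg : 0 < g) :
    ((s / g) ^ (1 / (α + β))) ^ α * g = s ^ (α / (α + β)) * g ^ (β / (α + β)) := by
  have hexp : 1 / (α + β) * α = α / (α + β) := by ring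
  have hexp' : β / (α + β) = 1 - α / (α + β) := by
    field_simp
    ring
  rw [← Real.rpow_mul (by positivity), hexp, Real.div_rpow hs.le hg.le, hexp', Real.rpow_sub hg,
    Real.rpow_one]
  ring

lemma exists_mul_rpow_add_mul_rpow_neg_eq (hα : 0 < α) (hβ : 0 < β) {s g : ℝ} (hs : 0 < s)
    (hg : 0 < g) :
    ∃ T, 0 < T ∧ α⁻¹ * T ^ α * g + β⁻¹ * T ^ (-β) * s =
      (α⁻¹ + β⁻¹) * s ^ (α / (α + β)) * g ^ (β / (α + β)) := by
  refine ⟨(s / g) ^ (1 / (α + β)), by positivity, ?_⟩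
  have hneg : ((s / g) ^ (1 / (α + β))) ^ (-β) * s = s ^ (α / (α + β)) * g ^ (β / (α + β)) := by
    rw [Real.rpow_neg (by positivity), ← Real.inv_rpow (by positivity),
      ← Real.inv_rpow (by positivity), inv_div, add_comm α β,
      rpow_div_rpow_one_div_add_mul hβ hα hg hs, mul_comm]
  rw [mul_assoc, mul_assoc, rpow_div_rpow_one_div_add_mul hα hβ hs hg, hneg]
  ring

variable {V : ℝ → ℝ≥0∞} {G S : ℝ≥0∞}

lemma setLIntegral_Ioi_le_add (hα : 0 < α) (hβ : 0 < β)
    (hG : ∀ t, 0 < t → V t ≤ ENNReal.ofReal (t ^ (α - 1)) * G)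
    (hS : ∀ t, 0 < t → V t ≤ ENNReal.ofReal (t ^ (-1 - β)) * S) {T : ℝ} (hT : 0 < T) :
    ∫⁻ t in Ioi 0, V t ≤
      ENNReal.ofReal (α⁻¹ * T ^ α) * G + ENNReal.ofReal (β⁻¹ * T ^ (-β)) * S := by
  rw [← Ioc_union_Ioi_eq_Ioi hT.le, lintegral_union measurableSet_Ioi (Ioc_disjoint_Ioi le_rfl),
    ← setLIntegral_Ioc_rpow_sub_one hα hT.le, ← setLIntegral_Ioi_rpow_neg_one_sub hβ hT,
    ← lintegral_mul_const _ (by fun_prop), ← lintegral_mul_const _ (by fun_prop)]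
  exact add_le_add (setLIntegral_mono' measurableSet_Ioc fun t ht ↦ hG t ht.1)
    (setLIntegral_mono' measurableSet_Ioi fun t ht ↦ hS t (hT.trans ht))

lemma setLIntegral_Ioi_le_rpow_mul_rpow (hα : 0 < α) (hβ : 0 < β)
    (hG : ∀ t, 0 < t → V t ≤ ENNReal.ofReal (t ^ (α - 1)) * G)
    (hS : ∀ t, 0 < t → V t ≤ ENNReal.ofReal (t ^ (-1 - β)) * S) :
    ∫⁻ t in Ioi 0, V t ≤
      ENNReal.ofReal (α⁻¹ + β⁻¹) * S ^ (α / (α + β)) * G ^ (β / (α + β)) := by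
  have hγ : 0 < α / (α + β) := by positivity
  have hγ' : 0 < β / (α + β) := by positivity
  have hC : ENNReal.ofReal (α⁻¹ + β⁻¹) ≠ 0 := (ENNReal.ofReal_pos.2 (by positivity)).ne'
  by_cases hSG : S = 0 ∨ G = 0
  · have hV : ∀ t ∈ Ioi (0 : ℝ), V t = 0 := fun t ht ↦ by
      rcases hSG with rfl | rfl
      · simpa using hS t ht
      · simpa using hG t ht
    rw [setLIntegral_congr_fun measurableSet_Ioi hV, lintegral_zero]
    exact zero_le
  obtain ⟨hS0, hG0⟩ := not_or.1 hSG
  rcases eq_or_ne S ⊤ with rfl | hS'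
  · simp [ENNReal.top_rpow_of_pos hγ, ENNReal.mul_top hC, ENNReal.top_mul, hG0, hγ'.le]
  rcases eq_or_ne G ⊤ with rfl | hG'
  · simp [ENNReal.top_rpow_of_pos hγ', ENNReal.mul_top, hS0, hγ.le, hC]
  obtain ⟨s, hs, rfl⟩ : ∃ s, 0 < s ∧ S = ENNReal.ofReal s :=
    ⟨S.toReal, ENNReal.toReal_pos hS0 hS', (ENNReal.ofReal_toReal hS').symm⟩
  obtain ⟨g, hg, rfl⟩ : ∃ g, 0 < g ∧ G = ENNReal.ofReal g :=
    ⟨G.toReal, ENNReal.toReal_pos hG0 hG', (ENNReal.ofReal_toReal hG').symm⟩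
  obtain ⟨T, hT, hTeq⟩ := exists_mul_rpow_add_mul_rpow_neg_eq hα hβ hs hg
  refine (setLIntegral_Ioi_le_add hα hβ hG hS hT).trans_eq ?_
  rw [ENNReal.ofReal_rpow_of_pos hs, ENNReal.ofReal_rpow_of_pos hg,
    ← ENNReal.ofReal_mul (by positivity), ← ENNReal.ofReal_mul (by positivity),
    ← ENNReal.ofReal_mul (by positivity), ← ENNReal.ofReal_mul (by positivity),
    ← ENNReal.ofReal_add (by positivity) (by positivity), hTeq]

end Interpolation

section Main

variable {d : ℕ} [NeZero d] {a : Ed d → ℂ}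

lemma integrable_inv_norm_smul_ftransform {f : 𝓢(Ed d, ℂ)} (hf : sobolevSemi d (-1) f ≠ ⊤) :
    Integrable fun κ ↦ ‖κ‖⁻¹ • ftransform d f κ := by
  have hcont := continuous_ftransform f.integrable
  have hmeas : AEStronglyMeasurable fun κ ↦ ‖κ‖⁻¹ • ftransform d f κ :=
    Measurable.aestronglyMeasurable (by have := hcont.measurable; fun_prop)
  have hL2 : MemLp (fun κ ↦ ‖κ‖⁻¹ • ftransform d f κ) 2 := by
    refine ⟨hmeas, ?_⟩
    simp_rw [← Real.rpow_neg_one, eLpNorm_norm_rpow_smul_ftransform]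
    exact ENNReal.mul_lt_top ENNReal.ofReal_lt_top hf.lt_top
  rw [← integrableOn_univ, ← union_compl_self (Metric.closedBall (0 : Ed d) 1), integrableOn_union]
  constructor
  · have : IsFiniteMeasure (volume.restrict (Metric.closedBall (0 : Ed d) 1)) :=
      isFiniteMeasure_restrict.2 measure_closedBall_lt_top.ne
    exact (hL2.restrict _).integrable one_le_two
  · have hft : Integrable (ftransform d f) := by
      rw [← coe_ftransformSchwartz]
      exact (ftransformSchwartz f).integrable
    refine hft.restrict.mono hmeas.restrict
      (ae_restrict_of_forall_mem Metric.isClosed_closedBall.measurableSet.compl fun κ hκ ↦ ?_)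
    rw [norm_smul, norm_inv, norm_norm]
    have hκ' : 1 < ‖κ‖ := by simpa using hκ
    exact mul_le_of_le_one_left (norm_nonneg _) (inv_le_one_of_one_le₀ hκ'.le)

namespace IsSymbol0

lemma integrable_inv_norm_mul_mul_ftransform (ha : IsSymbol0 d a) {f : 𝓢(Ed d, ℂ)}
    (hf : sobolevSemi d (-1) f ≠ ⊤) :
    Integrable fun κ ↦ ((‖κ‖ : ℝ) : ℂ)⁻¹ * a κ * ftransform d f κ := by
  have hmeas : AEStronglyMeasurable a := by
    rw [← restrict_compl_singleton (μ := volume) (0 : Ed d)]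
    exact ha.1.continuousOn.aestronglyMeasurable (measurableSet_singleton 0).compl
  obtain ⟨B, hB⟩ := ha.exists_norm_le
  refine ((integrable_inv_norm_smul_ftransform hf).bdd_mul hmeas
    ((Measure.ae_ne volume 0).mono hB)).congr (.of_forall fun κ ↦ ?_)
  simp only [Complex.real_smul, Complex.ofReal_inv]
  ring

lemma exists_enorm_integral_le_sobolevSemi_rpow_mul_gagliardo_rpow (ha : IsSymbol0 d a) {r p : ℝ}
    (hp : 1 ≤ p) (hs : 0 ≤ r + d / p) (hα : 0 < r + 1 - d / p) :
    ∃ C : ℝ≥0, ∀ f : Ed d → ℂ, Integrable f →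
      Integrable (fun κ ↦ ((‖κ‖ : ℝ) : ℂ)⁻¹ * a κ * ftransform d f κ) → ∀ x,
      ‖∫ κ, Complex.exp (Complex.I * (⟪x, κ⟫ : ℂ)) * ((‖κ‖ : ℝ) : ℂ)⁻¹ * a κ *
          ftransform d f κ‖ₑ ≤
        C * sobolevSemi d (-1) f ^ ((r + 1 - d / p) / (r + 1 - d / p + d / 2)) *
          gagliardo d r p f ^ ((d / 2) / (r + 1 - d / p + d / 2)) := by
  set α : ℝ := r + 1 - d / p
  set β : ℝ := d / 2
  have hβ : 0 < β := half_pos (mod_cast NeZero.pos d)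
  set M : 𝓢(Ed d, ℂ) :=
    (hasCompactSupport_localizedSymbol a).toSchwartzMap ha.contDiff_localizedSymbol
  have hM : M 0 = 0 := localizedSymbol_eq_zero a (by norm_num)
  obtain ⟨C₁, hC₁⟩ := exists_enorm_integral_mul_ftransform_le_gagliardo hp hs hM
  obtain ⟨C₂, hC₂⟩ :=
    exists_enorm_integral_mul_ftransform_le_sobolevSemi (θ := -1) (by norm_num) M
  set K : ℝ≥0∞ := ENNReal.ofReal (α⁻¹ + β⁻¹) * C₂ ^ (α / (α + β)) * C₁ ^ (β / (α + β))
  have hK : K ≠ ⊤ := by finiteness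
  refine ⟨K.toNNReal, fun f hf haf x ↦ ?_⟩
  have hdil {t : ℝ} (ht : 0 < t) : Integrable fun y ↦ f (x + t • y) :=
    (hf.comp_add_left x).comp_smul ht.ne'
  calc _ ≤ ∫⁻ t in Ioi (0 : ℝ), ‖∫ ξ, M ξ * ftransform d (fun y ↦ f (x + t • y)) ξ‖ₑ :=
        ha.enorm_integral_le_lintegral_localizedSymbol hf haf x
    _ ≤ ENNReal.ofReal (α⁻¹ + β⁻¹) * (C₂ * sobolevSemi d (-1) f) ^ (α / (α + β)) *
          (C₁ * gagliardo d r p f) ^ (β / (α + β)) := by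
        refine setLIntegral_Ioi_le_rpow_mul_rpow hα hβ (fun t ht ↦ ?_) fun t ht ↦ ?_
        · have hexp : α - 1 = r - d / p := by ring
          refine (hC₁ _ (hdil ht)).trans_eq ?_
          rw [gagliardo_comp_add_smul r (by linarith) f x ht, mul_left_comm, hexp]
        · refine (hC₂ _ (hdil ht)).trans_eq ?_
          rw [sobolevSemi_comp_add_smul (-1) f x ht, mul_left_comm]
    _ = _ := by
        rw [ENNReal.coe_toNNReal hK, ENNReal.mul_rpow_of_nonneg _ _ (by positivity),
          ENNReal.mul_rpow_of_nonneg _ _ (by positivity)]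
        ring

end IsSymbol0

end Main

end

theorem stmt7_general (d : ℕ) [NeZero d] (r p : ℝ) (hp : 1 ≤ p) (hs : 0 ≤ r + d / p)
    (hrp : r > d / p - 1) (a : Ed d → ℂ) (ha : IsSymbol0 d a) :
    ∃ C : ℝ, 0 < C ∧ ∀ f : Ed d → ℂ, Integrable f →
      Integrable (fun κ ↦ ((‖κ‖ : ℝ) : ℂ)⁻¹ * a κ * ftransform d f κ) →
      (⨆ x, (‖(((2 * Real.pi) ^ (-(d : ℝ)) : ℝ) : ℂ) *
          ∫ κ, Complex.exp (Complex.I * (⟪x, κ⟫ : ℂ)) * ((‖κ‖ : ℝ) : ℂ)⁻¹ * a κ *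
            ftransform d f κ‖₊ : ℝ≥0∞))
        ≤ ENNReal.ofReal C *
            sobolevSemi d (-1) f ^ ((r + 1 - d / p) / (r + 1 + d * (p - 2) / (2 * p))) *
            gagliardo d r p f ^ (1 - (r + 1 - d / p) / (r + 1 + d * (p - 2) / (2 * p))) := by
  obtain ⟨C, hC⟩ := ha.exists_enorm_integral_le_sobolevSemi_rpow_mul_gagliardo_rpow hp hs
    (by linarith)
  have hd : (0 : ℝ) < d := mod_cast NeZero.pos d
  have hsum : r + 1 + d * (p - 2) / (2 * p) = (r + 1 - d / p) + d / 2 := by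
    field_simp
    ring
  have hγ : 1 - (r + 1 - d / p) / ((r + 1 - d / p) + d / 2) =
      (d / 2) / ((r + 1 - d / p) + d / 2) := by
    rw [one_sub_div (by linarith), add_sub_cancel_left]
  set N : ℝ := (2 * Real.pi) ^ (-(d : ℝ))
  have hN : 0 < N := by positivity
  refine ⟨N * (C + 1), by positivity, fun f hf haf ↦ iSup_le fun x ↦ ?_⟩
  rw [hsum, hγ, ← enorm_eq_nnnorm, enorm_mul, ENNReal.ofReal_mul hN.le, mul_assoc, mul_assoc]
  refine mul_le_mul' ?_ ((hC f hf haf x).trans ?_)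
  · rw [← ofReal_norm, Complex.norm_of_nonneg hN.le]
  · rw [mul_assoc]
    gcongr
    rw [← ENNReal.ofReal_coe_nnreal]
    exact ENNReal.ofReal_le_ofReal (by linarith)

/-- For a symbol `a ∈ S⁰_{ph}` in dimension `d ≥ 2`, `0 < r < 1`,
`2 ≤ p < ∞` with `r > d/p − 1`, and `γ₂ = (r + 1 − d/p)/(r + 1 + d(p−2)/(2p))`, the
function `D^{-1}𝔞[f](x) = (2π)^{-d} ∫ e^{i x·κ} |κ|^{-1} a(κ) f̂(κ) dκ` satisfies
`‖D^{-1}𝔞[f]‖_∞ ≤ C [f]_{−1}^{γ₂} [f]_{r,p}^{1−γ₂}`. -/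
theorem stmt7 (d : ℕ) (hd : 2 ≤ d) (r p : ℝ) (hr0 : 0 < r) (hr1 : r < 1) (hp : 2 ≤ p)
    (hrp : r > d / p - 1) (a : Ed d → ℂ) (ha : IsSymbol0 d a) :
    ∃ C : ℝ, 0 < C ∧ ∀ f : SchwartzMap (Ed d) ℂ,
      sobolevSemi d (-1) ⇑f ≠ ⊤ →
      (⨆ x, (‖(((2 * Real.pi) ^ (-(d : ℝ)) : ℝ) : ℂ) *
          ∫ κ, Complex.exp (Complex.I * (⟪x, κ⟫ : ℂ)) * ((‖κ‖ : ℝ) : ℂ)⁻¹ * a κ *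
            ftransform d (⇑f) κ‖₊ : ℝ≥0∞))
        ≤ ENNReal.ofReal C *
            sobolevSemi d (-1) ⇑f ^ ((r + 1 - d / p) / (r + 1 + d * (p - 2) / (2 * p))) *
            gagliardo d r p ⇑f ^ (1 - (r + 1 - d / p) / (r + 1 + d * (p - 2) / (2 * p))) := by
  have : NeZero d := ⟨by omega⟩
  obtain ⟨C, hC, h⟩ := stmt7_general d r p (by linarith) (by positivity) hrp a ha
  exact ⟨C, hC, fun f hf ↦ h f f.integrable (ha.integrable_inv_norm_mul_mul_ftransform hf)⟩
end

section
/- Let 0 < r < 1. There exists a constant C, depending only on r, such that for every Schwartz vector field v = (v¹, v²) : ℝ² → ℝ² with div v = 0 and vorticity ω = ∂₁v² − ∂₂v¹, one has ‖v‖_{L^∞} ≤ C · ‖v‖_{L²}^{(r+1)/(r+2)} · {ω}_r^{1/(r+2)}. -/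
open MeasureTheory ENNReal
open scoped RealInnerProductSpace

/-!
Put `f = v¹ − i v²`; then `(∂₁ + i ∂₂) f = div v − i ω`, so `g := (∂₁ + i ∂₂) f` is as Hölder
continuous as `ω`. Pointwise, `f'(x) w = w̄ g(x) − i f'(x)(i w)`. Take `x = c + t w` and integrate
over the ball `|w| ≤ R`: the last term vanishes by rotation invariance, and `g(x)` may be replaced
by `g(x) − g(c)` because `w̄` is odd. The left side becomes the `t`-derivative of `∫ f(c + t w) dw`,
whence `|⨍_{B(c, R)} f − f(c)| ≤ {ω}_r R^{r + 1}`. By Cauchy–Schwarz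
`|⨍_{B(c, R)} f| ≤ ‖v‖_{L²} / R`, and it remains to optimise in `R`.
-/

open Complex Metric
open scoped ComplexConjugate

section Integrals

variable {E : Type*} [NormedAddCommGroup E] [NormedSpace ℝ E]

theorem hasDerivAt_setIntegral_of_isCompact {X : Type*} [TopologicalSpace X] [T2Space X]
    [MeasurableSpace X] [BorelSpace X] {μ : Measure X} [IsFiniteMeasureOnCompacts μ]
    {s : Set X} (hs : IsCompact s) {F F' : ℝ → X → E} (hF : ∀ t, Continuous (F t))
    (hF' : Continuous fun p : ℝ × X => F' p.1 p.2)
    (hderiv : ∀ t x, HasDerivAt (fun u => F u x) (F' t x) t) (t : ℝ) :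
    HasDerivAt (fun u => ∫ x in s, F u x ∂μ) (∫ x in s, F' t x ∂μ) t := by
  have hF't : Continuous (F' t) := hF'.comp (.prodMk_right t)
  have integrable {G : X → E} (hG : Continuous G) : IntegrableOn G s μ :=
    hG.continuousOn.integrableOn_compact hs
  obtain ⟨M, hM⟩ := ((isCompact_closedBall t 1).prod hs).exists_bound_of_continuousOn
    hF'.continuousOn
  refine (hasDerivAt_integral_of_dominated_loc_of_deriv_le (bound := fun _ => M)
    (closedBall_mem_nhds t one_pos) (.of_forall fun u => (integrable (hF u)).1)
    (integrable (hF t)) (integrable hF't).1 ?_ (integrableOn_const hs.measure_lt_top.ne) ?_).2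
  · filter_upwards [ae_restrict_mem hs.measurableSet] with x hx u hu using hM (u, x) ⟨hu, hx⟩
  · exact .of_forall fun x u _ => hderiv u x

theorem setIntegral_closedBall_comp_linearIsometryEquiv {V : Type*} [NormedAddCommGroup V]
    [InnerProductSpace ℝ V] [FiniteDimensional ℝ V] [MeasurableSpace V] [BorelSpace V]
    (e : V ≃ₗᵢ[ℝ] V) (F : V → E) (R : ℝ) :
    ∫ x in closedBall 0 R, F (e x) = ∫ x in closedBall 0 R, F x := by
  simpa using e.measurePreserving.setIntegral_preimage_emb e.toMeasurableEquiv.measurableEmbedding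
    F (closedBall 0 R)

theorem setIntegral_closedBall_eq_zero_of_odd {V : Type*} [NormedAddCommGroup V]
    [InnerProductSpace ℝ V] [FiniteDimensional ℝ V] [MeasurableSpace V] [BorelSpace V]
    {F : V → E} (hF : F.Odd) (R : ℝ) : ∫ x in closedBall 0 R, F x = 0 := by
  have h := setIntegral_closedBall_comp_linearIsometryEquiv (.neg ℝ) F R
  simp only [LinearIsometryEquiv.coe_neg, hF _, integral_neg] at h
  have double : (2 : ℝ) • ∫ x in closedBall 0 R, F x = 0 := by
    rw [two_smul]
    nth_rewrite 1 [← h]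
    exact neg_add_cancel _
  exact (smul_eq_zero.1 double).resolve_left two_ne_zero

theorem norm_setAverage_le_eLpNorm {X : Type*} [MeasurableSpace X] {μ : Measure X} {s : Set X}
    (hs₀ : μ s ≠ 0) (hs : μ s ≠ ∞) {f : X → E} {p : ℝ≥0∞} (hp : 1 ≤ p) (hf : MemLp f p μ) :
    ‖⨍ x in s, f x ∂μ‖ ≤ (μ.real s)⁻¹ ^ (1 / p).toReal * (eLpNorm f p μ).toReal := by
  set ν := (μ s)⁻¹ • μ.restrict s with hν
  have : IsProbabilityMeasure ν := ⟨by simp [hν, ENNReal.inv_mul_cancel hs₀ hs]⟩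
  have hfν : AEStronglyMeasurable f ν := hf.1.restrict.smul_measure _
  have bound : ‖∫ x, f x ∂ν‖ₑ ≤ (μ s)⁻¹ ^ (1 / p).toReal * eLpNorm f p μ := calc
    ‖∫ x, f x ∂ν‖ₑ ≤ eLpNorm f 1 ν := by
      rw [eLpNorm_one_eq_lintegral_enorm]; exact enorm_integral_le_lintegral_enorm f
    _ ≤ eLpNorm f p ν := eLpNorm_le_eLpNorm_of_exponent_le hp hfν
    _ = (μ s)⁻¹ ^ (1 / p).toReal * eLpNorm f p (μ.restrict s) := by
      rw [hν, eLpNorm_smul_measure_of_ne_zero (ENNReal.inv_ne_zero.2 hs), smul_eq_mul]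
    _ ≤ _ := by gcongr; exact Measure.restrict_le_self
  rw [average_eq', Measure.restrict_apply_univ, ← toReal_enorm, Measure.real, ← ENNReal.toReal_inv,
    ENNReal.toReal_rpow, ← ENNReal.toReal_mul]
  refine ENNReal.toReal_mono (ENNReal.mul_ne_top ?_ hf.2.ne) bound
  exact ENNReal.rpow_ne_top_of_nonneg ENNReal.toReal_nonneg (ENNReal.inv_ne_top.2 hs₀)

end Integrals

section Interpolation

variable {a L H s : ℝ}

theorem le_two_mul_rpow_mul_rpow_of_forall_le_of_pos (hL : 0 < L) (hH : 0 < H) (hs : 0 < s)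
    (h : ∀ R > 0, a ≤ L / R + H * R ^ s) :
    a ≤ 2 * (L ^ (s / (s + 1)) * H ^ (1 / (s + 1))) := by
  have hs₁ : s + 1 ≠ 0 := by positivity
  set x := L ^ (1 / (s + 1)) with hx
  set y := H ^ (1 / (s + 1)) with hy
  have hx₀ : 0 < x := by positivity
  have hy₀ : 0 < y := by positivity
  have hLx : L = x ^ s * x := by
    rw [← Real.rpow_add_one hx₀.ne', hx, ← Real.rpow_mul hL.le, one_div_mul_cancel hs₁,
      Real.rpow_one]
  have hHy : H = y ^ s * y := by
    rw [← Real.rpow_add_one hy₀.ne', hy, ← Real.rpow_mul hH.le, one_div_mul_cancel hs₁,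
      Real.rpow_one]
  have hLs : L ^ (s / (s + 1)) = x ^ s := by
    rw [hx, ← Real.rpow_mul hL.le, one_div_mul_eq_div]
  -- The two terms balance at `R = x / y`.
  calc a ≤ L / (x / y) + H * (x / y) ^ s := h _ (by positivity)
    _ = 2 * (L ^ (s / (s + 1)) * y) := by
      rw [hLs, hLx, hHy, Real.div_rpow hx₀.le hy₀.le]
      field_simp
      ring

theorem le_two_mul_rpow_mul_rpow_of_forall_le (hL : 0 ≤ L) (hH : 0 ≤ H) (hs : 0 < s)
    (h : ∀ R > 0, a ≤ L / R + H * R ^ s) :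
    a ≤ 2 * (L ^ (s / (s + 1)) * H ^ (1 / (s + 1))) := by
  have hcont : Continuous fun ε : ℝ => 2 * ((L + ε) ^ (s / (s + 1)) * (H + ε) ^ (1 / (s + 1))) := by
    fun_prop (disch := positivity)
  have hlim := hcont.continuousWithinAt (s := Set.Ioi 0) (x := 0)
  simp only [ContinuousWithinAt, add_zero] at hlim
  refine ge_of_tendsto hlim ?_
  filter_upwards [self_mem_nhdsWithin] with ε (hε : 0 < ε)
  refine le_two_mul_rpow_mul_rpow_of_forall_le_of_pos (by positivity) (by positivity) hs
    fun R hR => (h R hR).trans ?_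
  gcongr <;> linarith

end Interpolation

section CauchyRiemann

variable {E : Type*} [NormedAddCommGroup E] [NormedSpace ℂ E] {f : ℂ → E} {c : ℂ} {R : ℝ}

/-- The Cauchy–Riemann operator `∂₁ + i ∂₂ = 2 ∂/∂z̄`, applied to a real-differentiable function of
a complex variable; unlike `∂/∂z̄`, it carries no factor `1 / 2`. -/
noncomputable def cauchyRiemann (f : ℂ → E) (z : ℂ) : E :=
  fderiv ℝ f z 1 + I • fderiv ℝ f z I

theorem continuous_cauchyRiemann (hf : ContDiff ℝ 1 f) : Continuous (cauchyRiemann f) := by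
  have : Continuous (fderiv ℝ f) := hf.continuous_fderiv one_ne_zero
  unfold cauchyRiemann
  fun_prop

theorem fderiv_apply_eq_conj_smul_cauchyRiemann_sub (f : ℂ → E) (z w : ℂ) :
    fderiv ℝ f z w = conj w • cauchyRiemann f z - I • fderiv ℝ f z (I * w) := by
  have linear (u : ℂ) :
      fderiv ℝ f z u = (u.re : ℂ) • fderiv ℝ f z 1 + (u.im : ℂ) • fderiv ℝ f z I := by
    conv_lhs => rw [show u = u.re • (1 : ℂ) + u.im • I by simp [re_add_im]]
    simp only [map_add, map_smul, Complex.coe_smul]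
  rw [linear w, linear (I * w), cauchyRiemann]
  match_scalars <;> apply Complex.ext <;> simp

/-- Infinitesimal form of the invariance of `∫ f (c + t z) dz` under rotations of the ball. -/
theorem setIntegral_fderiv_I_mul_eq_zero (hf : ContDiff ℝ 1 f) (c : ℂ) (R t : ℝ) :
    ∫ z in closedBall 0 R, fderiv ℝ f (c + t * z) (I * z) = 0 := by
  obtain rfl | ht := eq_or_ne t 0
  · exact setIntegral_closedBall_eq_zero_of_odd (fun z => by simp) R
  have : Continuous (fderiv ℝ f) := hf.continuous_fderiv one_ne_zero
  have rotate (α : ℝ) : ∫ z in closedBall 0 R, f (c + t * (exp (α * I) * z)) =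
      ∫ z in closedBall 0 R, f (c + t * z) :=
    setIntegral_closedBall_comp_linearIsometryEquiv (rotation (Circle.exp α))
      (fun z => f (c + t * z)) R
  have deriv_rotate (α : ℝ) (z : ℂ) : HasDerivAt (fun β : ℝ => f (c + t * (exp (β * I) * z)))
      (fderiv ℝ f (c + t * (exp (α * I) * z)) (t * (exp (α * I) * I * z))) α := by
    have hexp : HasDerivAt (fun β : ℝ => exp (β * I)) (exp (α * I) * I) α := by
      simpa using (ofRealCLM.hasDerivAt.mul_const I).cexp
    exact (hf.differentiable one_ne_zero _).hasFDerivAt.comp_hasDerivAt α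
      (((hexp.mul_const z).const_mul (t : ℂ)).const_add c)
  have key := hasDerivAt_setIntegral_of_isCompact (μ := volume) (isCompact_closedBall 0 R)
    (fun α : ℝ => by fun_prop) (by fun_prop) deriv_rotate 0
  simp only [rotate, Complex.ofReal_zero, zero_mul, exp_zero, one_mul] at key
  simp only [← real_smul, map_smul, integral_smul] at key
  exact (smul_eq_zero.1 (key.unique (hasDerivAt_const _ _))).resolve_left ht

theorem setIntegral_fderiv_eq_conj_smul_cauchyRiemann_sub (hf : ContDiff ℝ 1 f) (c : ℂ) (R t : ℝ) :
    ∫ z in closedBall 0 R, fderiv ℝ f (c + t * z) z =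
      ∫ z in closedBall 0 R, conj z • (cauchyRiemann f (c + t * z) - cauchyRiemann f c) := by
  have : Continuous (fderiv ℝ f) := hf.continuous_fderiv one_ne_zero
  have hCR := continuous_cauchyRiemann hf
  have integrable {G : ℂ → E} (hG : Continuous G) : IntegrableOn G (closedBall 0 R) :=
    hG.continuousOn.integrableOn_compact (isCompact_closedBall 0 R)
  have odd : ∫ z in closedBall (0 : ℂ) R, conj z • cauchyRiemann f c = 0 :=
    setIntegral_closedBall_eq_zero_of_odd (fun z => by simp) R
  simp_rw [smul_sub]
  rw [integral_congr_ae (.of_forall fun z =>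
      fderiv_apply_eq_conj_smul_cauchyRiemann_sub f (c + t * z) z),
    integral_sub (integrable (by fun_prop)) (integrable (by fun_prop)),
    integral_sub (integrable (by fun_prop)) (integrable (by fun_prop)), integral_smul,
    setIntegral_fderiv_I_mul_eq_zero hf, odd, smul_zero]

theorem norm_setIntegral_closedBall_sub_le (hf : ContDiff ℝ 1 f) {K : ℝ}
    (hK : ∀ z ∈ closedBall c R, ‖cauchyRiemann f z - cauchyRiemann f c‖ ≤ K) :
    ‖(∫ z in closedBall 0 R, f (c + z)) - ∫ _ in closedBall (0 : ℂ) R, f c‖ ≤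
      K * R * volume.real (closedBall (0 : ℂ) R) := by
  have : Continuous (fderiv ℝ f) := hf.continuous_fderiv one_ne_zero
  have deriv_dilate (t : ℝ) (z : ℂ) :
      HasDerivAt (fun u : ℝ => f (c + u * z)) (fderiv ℝ f (c + t * z) z) t := by
    have h : HasDerivAt (fun u : ℝ => c + u * z) z t := by
      simpa using (ofRealCLM.hasDerivAt.mul_const z).const_add c
    exact (hf.differentiable one_ne_zero _).hasFDerivAt.comp_hasDerivAt t h
  have key (t : ℝ) := hasDerivAt_setIntegral_of_isCompact (μ := volume) (isCompact_closedBall 0 R)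
    (fun u : ℝ => by fun_prop) (by fun_prop) deriv_dilate t
  have bound (t : ℝ) (ht : t ∈ Set.Ico (0 : ℝ) 1) :
      ‖∫ z in closedBall 0 R, fderiv ℝ f (c + t * z) z‖ ≤
        K * R * volume.real (closedBall (0 : ℂ) R) := by
    rw [setIntegral_fderiv_eq_conj_smul_cauchyRiemann_sub hf]
    refine norm_setIntegral_le_of_norm_le_const measure_closedBall_lt_top fun z hz => ?_
    rw [mem_closedBall_zero_iff] at hz
    have htz : c + t * z ∈ closedBall c R := by
      rw [mem_closedBall, dist_self_add_left, norm_mul, norm_real, Real.norm_of_nonneg ht.1]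
      exact (mul_le_of_le_one_left (norm_nonneg z) ht.2.le).trans hz
    rw [norm_smul, RCLike.norm_conj, mul_comm]
    have h := hK _ htz
    gcongr
    exact (norm_nonneg _).trans h
  simpa using norm_image_sub_le_of_norm_deriv_le_segment_01'
    (fun t _ => (key t).hasDerivWithinAt) bound

theorem norm_setAverage_closedBall_sub_le [CompleteSpace E] (hf : ContDiff ℝ 1 f) (hR : 0 < R)
    {K : ℝ} (hK : ∀ z ∈ closedBall c R, ‖cauchyRiemann f z - cauchyRiemann f c‖ ≤ K) :
    ‖(⨍ z in closedBall c R, f z) - f c‖ ≤ K * R := by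
  set m := volume.real (closedBall (0 : ℂ) R) with hm
  have hmc : volume.real (closedBall c R) = m := by simp [m, Measure.real]
  have hm₀ : 0 < m := ENNReal.toReal_pos (measure_closedBall_pos volume 0 hR).ne'
    measure_closedBall_lt_top.ne
  have translate : ∫ z in closedBall c R, f z = ∫ z in closedBall 0 R, f (c + z) := by
    simpa using ((measurePreserving_add_left volume c).setIntegral_preimage_emb
      (measurableEmbedding_addLeft c) f (closedBall c R)).symm
  have key := norm_setIntegral_closedBall_sub_le hf hK
  rw [setIntegral_const, ← hm] at key
  calc ‖(⨍ z in closedBall c R, f z) - f c‖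
      = m⁻¹ * ‖(∫ z in closedBall 0 R, f (c + z)) - m • f c‖ := by
        rw [setAverage_eq, hmc, translate, ← norm_smul_of_nonneg (by positivity), smul_sub,
          inv_smul_smul₀ hm₀.ne']
    _ ≤ m⁻¹ * (K * R * m) := by gcongr
    _ = K * R := by field_simp

theorem sq_le_volume_real_closedBall (c : ℂ) (hR : 0 ≤ R) :
    R ^ 2 ≤ volume.real (closedBall c R) := by
  simp only [Measure.real, Complex.volume_closedBall, ENNReal.toReal_mul, ENNReal.toReal_pow,
    ENNReal.toReal_ofReal hR, ENNReal.coe_toReal, NNReal.coe_real_pi]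
  nlinarith [sq_nonneg R, Real.pi_gt_three]

theorem norm_setAverage_closedBall_le_eLpNorm_div (hf₂ : MemLp f 2) (c : ℂ) (hR : 0 < R) :
    ‖⨍ z in closedBall c R, f z‖ ≤ (eLpNorm f 2).toReal / R := by
  have hsqrt : √(volume.real (closedBall c R))⁻¹ ≤ R⁻¹ := by
    rw [Real.sqrt_inv]
    exact inv_anti₀ hR (Real.le_sqrt_of_sq_le (sq_le_volume_real_closedBall c hR.le))
  have half : (1 / 2 : ℝ≥0∞).toReal = 1 / 2 := by simp
  have cauchy_schwarz := norm_setAverage_le_eLpNorm (measure_closedBall_pos volume c hR).ne'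
    measure_closedBall_lt_top.ne one_le_two hf₂
  rw [half, ← Real.sqrt_eq_rpow] at cauchy_schwarz
  rw [div_eq_inv_mul]
  exact cauchy_schwarz.trans (by gcongr)

theorem norm_le_eLpNorm_div_add [CompleteSpace E] (hf : ContDiff ℝ 1 f) (hf₂ : MemLp f 2)
    (hR : 0 < R) {K : ℝ} (hK : ∀ z ∈ closedBall c R, ‖cauchyRiemann f z - cauchyRiemann f c‖ ≤ K) :
    ‖f c‖ ≤ (eLpNorm f 2).toReal / R + K * R := calc
  _ ≤ ‖⨍ z in closedBall c R, f z‖ + ‖(⨍ z in closedBall c R, f z) - f c‖ :=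
    norm_le_norm_add_norm_sub _ _
  _ ≤ _ := add_le_add (norm_setAverage_closedBall_le_eLpNorm_div hf₂ c hR)
    (norm_setAverage_closedBall_sub_le hf hR hK)

theorem norm_le_two_mul_eLpNorm_rpow_mul_rpow [CompleteSpace E] (hf : ContDiff ℝ 1 f)
    (hf₂ : MemLp f 2) {r H : ℝ} (hr : 0 ≤ r) (hH : 0 ≤ H)
    (hHolder : ∀ z, ‖cauchyRiemann f z - cauchyRiemann f c‖ ≤ H * ‖z - c‖ ^ r) :
    ‖f c‖ ≤ 2 * ((eLpNorm f 2).toReal ^ ((r + 1) / (r + 2)) * H ^ (1 / (r + 2))) := by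
  rw [show r + 2 = r + 1 + 1 by ring]
  refine le_two_mul_rpow_mul_rpow_of_forall_le ENNReal.toReal_nonneg hH (by positivity)
    fun R hR => ?_
  rw [Real.rpow_add_one hR.ne', ← mul_assoc]
  refine norm_le_eLpNorm_div_add hf hf₂ hR fun z hz => (hHolder z).trans ?_
  rw [mem_closedBall_iff_norm] at hz
  gcongr

end CauchyRiemann

section Planar

variable {v : Ed 2 → Ed 2}

/-- The divergence `∂₁v¹ + ∂₂v²` of a planar vector field. -/
noncomputable def planarDivergence (v : Ed 2 → Ed 2) (x : Ed 2) : ℝ :=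
  pd 2 0 (fun y => v y 0) x + pd 2 1 (fun y => v y 1) x

/-- The vorticity `∂₁v² − ∂₂v¹` of a planar vector field. -/
noncomputable def planarVorticity (v : Ed 2 → Ed 2) (x : Ed 2) : ℝ :=
  pd 2 0 (fun y => v y 1) x - pd 2 1 (fun y => v y 0) x

/-- The complex velocity `v¹ − i v²` of a planar vector field, as a function of `x₁ + i x₂`. -/
noncomputable def complexVelocity (v : Ed 2 → Ed 2) (z : ℂ) : ℂ :=
  conj (orthonormalBasisOneI.repr.symm (v (orthonormalBasisOneI.repr z)))

theorem norm_complexVelocity (v : Ed 2 → Ed 2) (z : ℂ) :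
    ‖complexVelocity v z‖ = ‖v (orthonormalBasisOneI.repr z)‖ := by
  rw [complexVelocity, RCLike.norm_conj, LinearIsometryEquiv.norm_map]

theorem contDiff_complexVelocity (hv : ContDiff ℝ 1 v) : ContDiff ℝ 1 (complexVelocity v) :=
  conjCLE.contDiff.comp <| orthonormalBasisOneI.repr.symm.contDiff.comp <|
    hv.comp orthonormalBasisOneI.repr.contDiff

theorem eLpNorm_complexVelocity (hv : AEStronglyMeasurable v) (p : ℝ≥0∞) :
    eLpNorm (complexVelocity v) p = eLpNorm v p := by
  rw [← eLpNorm_comp_measurePreserving hv orthonormalBasisOneI.measurePreserving_repr]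
  exact eLpNorm_congr_norm_ae (.of_forall (norm_complexVelocity v))

theorem pd_apply_eq_fderiv_apply {d : ℕ} {x : Ed d} {u : Ed d → Ed d}
    (hu : DifferentiableAt ℝ u x) (i j : Fin d) :
    pd d i (fun y => u y j) x = fderiv ℝ u x (EuclideanSpace.single i 1) j := by
  have h := (EuclideanSpace.proj (𝕜 := ℝ) j).hasFDerivAt.comp x hu.hasFDerivAt
  exact DFunLike.congr_fun h.fderiv (EuclideanSpace.single i 1)

theorem fderiv_complexVelocity_apply (hv : Differentiable ℝ v) (z w : ℂ) :
    fderiv ℝ (complexVelocity v) z w =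
      conj (orthonormalBasisOneI.repr.symm
        (fderiv ℝ v (orthonormalBasisOneI.repr z) (orthonormalBasisOneI.repr w))) := by
  have h := conjCLE.hasFDerivAt.comp z <| orthonormalBasisOneI.repr.symm.hasFDerivAt.comp z <|
    (hv _).hasFDerivAt.comp z orthonormalBasisOneI.repr.hasFDerivAt
  exact DFunLike.congr_fun h.fderiv w

theorem cauchyRiemann_complexVelocity (hv : Differentiable ℝ v) (z : ℂ) :
    cauchyRiemann (complexVelocity v) z =
      planarDivergence v (orthonormalBasisOneI.repr z) -
        I * planarVorticity v (orthonormalBasisOneI.repr z) := by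
  have repr_one : orthonormalBasisOneI.repr 1 = EuclideanSpace.single 0 1 := by
    ext i; fin_cases i <;> simp
  have repr_I : orthonormalBasisOneI.repr I = EuclideanSpace.single 1 1 := by
    ext i; fin_cases i <;> simp
  simp only [cauchyRiemann, fderiv_complexVelocity_apply hv, repr_one, repr_I, planarDivergence,
    planarVorticity, pd_apply_eq_fderiv_apply (hv _), orthonormalBasisOneI_repr_symm_apply]
  apply Complex.ext <;> simp [neg_add_eq_sub]

theorem norm_sub_le_toReal_holderSemi_mul {d : ℕ} {r : ℝ} {F : Type*}
    [NormedAddCommGroup F] {f : Ed d → F} (hf : holderSemi d r f ≠ ∞) (x y : Ed d) :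
    ‖f x - f y‖ ≤ (holderSemi d r f).toReal * ‖x - y‖ ^ r := by
  obtain rfl | hxy := eq_or_ne x y
  · simp only [sub_self, norm_zero]; positivity
  have hpos : 0 < ‖x - y‖ := norm_sub_pos_iff.2 hxy
  have h : (‖f x - f y‖₊ : ℝ≥0∞) / (‖x - y‖₊ : ℝ≥0∞) ^ r ≤ holderSemi d r f :=
    le_iSup₂ (f := fun x y => (‖f x - f y‖₊ : ℝ≥0∞) / (‖x - y‖₊ : ℝ≥0∞) ^ r) x y
  replace h := ENNReal.toReal_mono hf h
  rw [ENNReal.toReal_div, ← ENNReal.toReal_rpow, ENNReal.coe_toReal, ENNReal.coe_toReal,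
    coe_nnnorm, coe_nnnorm] at h
  exact (div_le_iff₀ (by positivity)).1 h

theorem norm_le_of_planarDivergence_eq_zero {r : ℝ} (hr : 0 ≤ r) (hv : ContDiff ℝ 1 v)
    (hv₂ : MemLp v 2) (hdiv : ∀ x, planarDivergence v x = 0)
    (hω : holderSemi 2 r (planarVorticity v) ≠ ∞) (x : Ed 2) :
    ‖v x‖ ≤ 2 * ((eLpNorm v 2).toReal ^ ((r + 1) / (r + 2)) *
      (holderSemi 2 r (planarVorticity v)).toReal ^ (1 / (r + 2))) := by
  obtain ⟨c, rfl⟩ := orthonormalBasisOneI.repr.surjective x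
  have hL := eLpNorm_complexVelocity hv₂.1 2
  rw [← norm_complexVelocity, ← hL]
  have hu := contDiff_complexVelocity hv
  refine norm_le_two_mul_eLpNorm_rpow_mul_rpow hu
    ⟨hu.continuous.aestronglyMeasurable, hL ▸ hv₂.2⟩ hr ENNReal.toReal_nonneg fun z => ?_
  have hv' := hv.differentiable one_ne_zero
  rw [cauchyRiemann_complexVelocity hv', cauchyRiemann_complexVelocity hv', hdiv, hdiv,
    _root_.sub_sub_sub_cancel_left, ← mul_sub, norm_mul, norm_I, one_mul, ← Complex.ofReal_sub,
    norm_real, norm_sub_rev]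
  simpa only [← map_sub, LinearIsometryEquiv.norm_map] using
    norm_sub_le_toReal_holderSemi_mul hω (orthonormalBasisOneI.repr z)
      (orthonormalBasisOneI.repr c)

end Planar

theorem stmt9_general {r : ℝ} (hr : 0 ≤ r) {v : Ed 2 → Ed 2} (hv : ContDiff ℝ 1 v)
    (hv₂ : MemLp v 2) (hdiv : ∀ x, planarDivergence v x = 0) :
    (⨆ x, (‖v x‖₊ : ℝ≥0∞)) ≤
      2 * eLpNorm v 2 ^ ((r + 1) / (r + 2)) *
        holderSemi 2 r (planarVorticity v) ^ (1 / (r + 2)) := by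
  obtain hL | hL := eq_or_ne (eLpNorm v 2) 0
  · have hv₀ : v = 0 := (hv.continuous.ae_eq_iff_eq volume continuous_zero).1
      ((eLpNorm_eq_zero_iff hv₂.1 two_ne_zero).1 hL)
    simp [hv₀]
  obtain hω | hω := eq_or_ne (holderSemi 2 r (planarVorticity v)) ∞
  · have hL' : eLpNorm v 2 ^ ((r + 1) / (r + 2)) ≠ 0 :=
      (ENNReal.rpow_pos (pos_iff_ne_zero.2 hL) hv₂.2.ne).ne'
    rw [hω, ENNReal.top_rpow_of_pos (by positivity),
      ENNReal.mul_top (mul_ne_zero two_ne_zero hL')]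
    exact le_top
  refine iSup_le fun x => ?_
  calc (‖v x‖₊ : ℝ≥0∞) = ENNReal.ofReal ‖v x‖ := (ofReal_norm (v x)).symm
    _ ≤ _ := ENNReal.ofReal_le_ofReal (norm_le_of_planarDivergence_eq_zero hr hv hv₂ hdiv hω x)
    _ = _ := by
      rw [ENNReal.ofReal_mul two_pos.le, ENNReal.ofReal_ofNat, ENNReal.ofReal_mul (by positivity),
        ← ENNReal.ofReal_rpow_of_nonneg ENNReal.toReal_nonneg (by positivity),
        ← ENNReal.ofReal_rpow_of_nonneg ENNReal.toReal_nonneg (by positivity),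
        ENNReal.ofReal_toReal hv₂.2.ne, ENNReal.ofReal_toReal hω, mul_assoc]

/-- For a divergence-free Schwartz vector field `v` on `ℝ²` with vorticity
`ω` and `0 < r < 1`: `‖v‖_∞ ≤ C ‖v‖₂^{(r+1)/(r+2)} {ω}_r^{1/(r+2)}`. -/
theorem stmt9 (r : ℝ) (hr0 : 0 < r) (hr1 : r < 1) :
    ∃ C : ℝ, 0 < C ∧ ∀ v : SchwartzMap (Ed 2) (Ed 2),
      (∀ x, pd 2 0 (fun y => v y 0) x + pd 2 1 (fun y => v y 1) x = 0) →
      (⨆ x, (‖v x‖₊ : ℝ≥0∞))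
        ≤ ENNReal.ofReal C * eLpNorm (⇑v) 2 volume ^ ((r + 1) / (r + 2)) *
          holderSemi 2 r
            (fun x => pd 2 0 (fun y => v y 1) x - pd 2 1 (fun y => v y 0) x)
              ^ (1 / (r + 2)) := by
  refine ⟨2, two_pos, fun v hdiv => ?_⟩
  rw [ENNReal.ofReal_ofNat]
  exact stmt9_general hr0.le (v.smooth 1) (v.memLp 2) hdiv
end
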